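/- arXiv:2406.00139 — 2 statements merged into one kernel-verified Lean document; each statement's English description precedes it below -/
import Mathlib

section
/- For all n ≥ 5, the number of partitions of n with odd parts distinct, even parts unrestricted, and all even parts greater than all odd parts, is strictly less than the number of partitions of n with even parts distinct, odd parts unrestricted, and all odd parts greater than all even parts. -/
/-!
Write `D N e` for the number of weakly increasing sequences `g` of `N` natural numbers with
`e + 2 * ∑ g = n` (`monoSeqs`); equivalently, the coefficient of `q ^ n` in
`q ^ e / ((1 - q ^ 2) ⋯ (1 - q ^ (2 * N)))`.

Sort the parts of a partition in increasing order and subtract the minimal partition having the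
same number `N` of parts and the same number `k` of small parts (odd ones for the left-hand side,
even ones for the right-hand side). The differences are even, and halving them gives a weakly
increasing sequence. The minimal partitions are

* `1, 3, …, 2k - 1, 2k, …, 2k`, of sum `k (2N - k)`, on the left when `1 ≤ k ≤ N`,
  and `2, …, 2`, of sum `2N`, when `k = 0`;
* `2, 4, …, 2k, 2k + 1, …, 2k + 1`, of sum `N + k (2N - k)`, on the right for `0 ≤ k ≤ N`.

Hence (`pcount_A_le`, `le_pcount_B`; only one inequality is needed for each) it suffices to show
`∑_N (D N (2N) + ∑_{1 ≤ k ≤ N} D N (k (2N - k))) < ∑_N ∑_{0 ≤ k ≤ N} D N (N + k (2N - k))`.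

This uses only that `D` is weakly decreasing in `e` along steps of `2` (for `N ≥ 1`) and the
recursion `D (N + 1) e = D N e + D (N + 1) (e + 2 (N + 1))`. Telescoping the recursion
from `⌈j / 2⌉` to `j` in the terms `D j j` (those with `k = 0` on the right) gives the terms
`D N (2N)` and `D N (2N - 1)` on the left (those with `k = 0, 1`) plus the surplus
`D i (4i - k)` for `2 ≤ k ≤ i` (`slack_le`). After exchanging `k = 2` and `k = 4`, the surplus
dominates the remaining left-hand terms `D i (k (2i - k))` one by one as soon as `i ≥ 4`
(`swap_le`). For `i = 2, 3` one also uses the right-hand terms `D 1 2` and `D 3 8`,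
and what remains is at least `D 2 5 + D 2 6` (`weighted_le`), which is positive for `n ≥ 5`.
-/


/-- Every odd part is greater than every even part. -/
def oddAbove (l : Multiset ℕ) : Prop :=
  ∀ a ∈ l, ∀ b ∈ l, Odd a → Even b → b < a

/-- Every even part is greater than every odd part. -/
def evenAbove (l : Multiset ℕ) : Prop :=
  ∀ a ∈ l, ∀ b ∈ l, Even a → Odd b → b < a

/-- The odd parts are distinct. -/
def oddDistinct (l : Multiset ℕ) : Prop :=
  ∀ a, Odd a → l.count a ≤ 1

/-- The even parts are distinct. -/
def evenDistinct (l : Multiset ℕ) : Prop :=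
  ∀ a, Even a → l.count a ≤ 1

/-- The number of partitions of `n` whose multiset of parts satisfies `P`. -/
noncomputable def pcount (n : ℕ) (P : Multiset ℕ → Prop) : ℕ :=
  Nat.card {p : Nat.Partition n // P p.parts}

/-! ### The inequality between weighted sums -/

section
variable {d : ℕ → ℕ → ℕ}

theorem anti_of_step (hmono : ∀ N e, 1 ≤ N → d N (e + 2) ≤ d N e) {N : ℕ} (hN : 1 ≤ N) (e c : ℕ) :
    d N (e + 2 * c) ≤ d N e := by
  induction c with
  | zero => simp
  | succ c ih => exact (hmono N (e + 2 * c) hN).trans ih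

/-- The recursion in the first argument, iterated from `N` to `j`. -/
theorem telescope (hrec : ∀ N e, d (N + 1) e = d N e + d (N + 1) (e + 2 * (N + 1)))
    {N j : ℕ} (h : N ≤ j) (e : ℕ) :
    d j e = d N e + ∑ i ∈ Finset.Ioc N j, d i (e + 2 * i) := by
  induction j, h using Nat.le_induction with
  | base => simp
  | succ j hj ih =>
    rw [hrec, ih, ← Finset.insert_Ioc_right_eq_Ioc_add_one hj, Finset.sum_insert (by simp)]
    ring

/-- Grouping the indices `j = 2N - 1` and `j = 2N`, for which `⌈j / 2⌉ = N`. -/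
theorem sum_half (f : ℕ → ℕ → ℕ) (n : ℕ) :
    ∑ j ∈ Finset.Icc 1 (2 * n), f ((j + 1) / 2) j =
      ∑ N ∈ Finset.Icc 1 n, (f N (2 * N) + f N (2 * N - 1)) := by
  induction n with
  | zero => simp
  | succ n ih =>
    rw [Finset.sum_Icc_succ_top (by omega), ← ih, show 2 * (n + 1) = 2 * n + 1 + 1 by ring,
      Finset.sum_Icc_succ_top (by omega), Finset.sum_Icc_succ_top (by omega),
      show (2 * n + 1 + 1) / 2 = n + 1 by omega, show (2 * n + 1 + 1 + 1) / 2 = n + 1 by omega]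
    simp only [Nat.add_sub_cancel]
    ring

/-- Telescoping each `d j j` down to `d ⌈j / 2⌉ j` leaves the terms `d i (j + 2i)` with
`⌈j / 2⌉ < i ≤ j`; for fixed `i` these include all `j` with `i ≤ j ≤ 2i - 2`, that is, `j = 2i - k`
with `2 ≤ k ≤ i`. -/
theorem slack_le (hrec : ∀ N e, d (N + 1) e = d N e + d (N + 1) (e + 2 * (N + 1))) (n : ℕ) :
    ∑ N ∈ Finset.Icc 1 n, (d N (2 * N) + d N (2 * N - 1)) +
      ∑ i ∈ Finset.Icc 1 n, ∑ k ∈ Finset.Icc 2 i, d i (4 * i - k) ≤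
    ∑ j ∈ Finset.Icc 1 (2 * n), d j j := by
  have h1 : ∀ j ∈ Finset.Icc 1 (2 * n), d j j =
      d ((j + 1) / 2) j + ∑ i ∈ Finset.Ioc ((j + 1) / 2) j, d i (j + 2 * i) := by
    intro j hj
    rw [Finset.mem_Icc] at hj
    exact telescope hrec (by omega) j
  rw [Finset.sum_congr rfl h1, ← sum_half, Finset.sum_add_distrib]
  gcongr
  have h2 : ∀ i ∈ Finset.Icc 1 n, ∑ k ∈ Finset.Icc 2 i, d i (4 * i - k) =
      ∑ j ∈ Finset.Icc i (2 * i - 2), d i (j + 2 * i) := by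
    intro i hi
    rw [Finset.mem_Icc] at hi
    refine Finset.sum_nbij' (fun k => 2 * i - k) (fun j => 2 * i - j) ?_ ?_ ?_ ?_ ?_
    all_goals intro k hk
    all_goals rw [Finset.mem_Icc] at hk
    · simp only [Finset.mem_Icc]; omega
    · simp only [Finset.mem_Icc]; omega
    · omega
    · omega
    · congr 1; omega
  rw [Finset.sum_congr rfl h2,
    Finset.sum_comm' (t' := Finset.Icc 1 (2 * n))
      (s' := fun j => (Finset.Icc 1 n).filter (fun i => i ≤ j ∧ j ≤ 2 * i - 2))
      (by intro i j; simp only [Finset.mem_Icc, Finset.mem_filter]; omega)]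
  refine Finset.sum_le_sum fun j hj => Finset.sum_le_sum_of_subset fun i hi => ?_
  simp only [Finset.mem_Icc, Finset.mem_filter, Finset.mem_Ioc] at *
  omega

/-- Termwise comparison after exchanging `k = 2` and `k = 4`: for `k = 2` itself,
`4i - 2` exceeds `2 (2i - 2)`, whereas `4i - 4` does not. -/
theorem swap_le (hmono : ∀ N e, 1 ≤ N → d N (e + 2) ≤ d N e) {i : ℕ} (hi : 4 ≤ i) :
    ∑ k ∈ Finset.Icc 2 i, d i (k * (2 * i - k)) ≤ ∑ k ∈ Finset.Icc 2 i, d i (4 * i - k) := by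
  rw [← Equiv.Perm.sum_comp (Equiv.swap 2 4) (Finset.Icc 2 i) (fun k => d i (4 * i - k))]
  · refine Finset.sum_le_sum fun k hk => ?_
    rw [Finset.mem_Icc] at hk
    have key : ∀ a b c, a = b + 2 * c → d i a ≤ d i b := by
      rintro a b c rfl
      exact anti_of_step hmono (by omega) b c
    obtain rfl | h2 := eq_or_ne k 2
    · rw [Equiv.swap_apply_left]
      exact key _ _ 0 (by omega)
    obtain rfl | h4 := eq_or_ne k 4
    · rw [Equiv.swap_apply_right]
      exact key _ _ (2 * i - 7) (by omega)
    rw [Equiv.swap_apply_of_ne_of_ne h2 h4]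
    obtain rfl | h3 := eq_or_ne k 3
    · exact key _ _ (i - 3) (by omega)
    obtain ⟨m, rfl⟩ := Nat.exists_eq_add_of_le hk.2
    -- The parity of `k ^ 2 + k` makes the two exponents congruent modulo `2`.
    obtain ⟨p, rfl⟩ := Nat.exists_eq_add_of_le (show 5 ≤ k by omega)
    obtain ⟨q, hq⟩ := Nat.even_mul_succ_self p
    -- With `k = 5 + p` and `i = k + m`, this is half of `k * (2 * i - k) - (4 * i - k)`.
    refine key _ _ (q + 3 * p + 5 + m * (p + 3)) ?_
    rw [show 2 * (5 + p + m) - (5 + p) = 5 + p + 2 * m by omega,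
      show 4 * (5 + p + m) - (5 + p) = 15 + 3 * p + 4 * m by omega]
    nlinarith
  · intro a ha
    by_contra h
    simp only [Finset.coe_Icc, Set.mem_Icc] at h
    exact ha (Equiv.swap_apply_of_ne_of_ne (by rintro rfl; omega) (by rintro rfl; omega))

theorem weighted_le (hrec : ∀ N e, d (N + 1) e = d N e + d (N + 1) (e + 2 * (N + 1)))
    (hmono : ∀ N e, 1 ≤ N → d N (e + 2) ≤ d N e) {n : ℕ} (hn : 3 ≤ n) :
    ∑ N ∈ Finset.Icc 1 n, (d N (2 * N) + ∑ k ∈ Finset.Icc 1 N, d N (k * (2 * N - k))) +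
        (d 2 5 + d 2 6) ≤
      ∑ N ∈ Finset.Icc 1 (2 * n), ∑ k ∈ Finset.range (N + 1), d N (N + k * (2 * N - k)) := by
  have hB : ∑ j ∈ Finset.Icc 1 (2 * n), d j j + (d 1 2 + d 2 5 + d 2 6 + d 3 8) ≤
      ∑ N ∈ Finset.Icc 1 (2 * n), ∑ k ∈ Finset.range (N + 1), d N (N + k * (2 * N - k)) := by
    rw [Finset.sum_congr rfl fun N _ => Finset.sum_range_succ' _ N, Finset.sum_add_distrib, add_comm]
    gcongr
    · refine le_trans ?_ (Finset.sum_le_sum_of_subset (s := Finset.Icc 1 3)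
        (Finset.Icc_subset_Icc_right (by omega)))
      simp [Finset.sum_Icc_succ_top, Finset.sum_range_succ]
      omega
    · simp
  have hA : ∑ N ∈ Finset.Icc 1 n, (d N (2 * N) + ∑ k ∈ Finset.Icc 1 N, d N (k * (2 * N - k))) =
      ∑ N ∈ Finset.Icc 1 n, (d N (2 * N) + d N (2 * N - 1)) +
        ∑ N ∈ Finset.Icc 1 n, ∑ k ∈ Finset.Icc 2 N, d N (k * (2 * N - k)) := by
    rw [← Finset.sum_add_distrib]
    refine Finset.sum_congr rfl fun N hN => ?_
    rw [Finset.mem_Icc] at hN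
    rw [← Finset.insert_Icc_add_one_left_eq_Icc hN.1, Finset.sum_insert (by simp)]
    simp only [one_mul, Nat.reduceAdd]
    ring
  have hC : ∑ N ∈ Finset.Icc 1 n, ∑ k ∈ Finset.Icc 2 N, d N (k * (2 * N - k)) ≤
      ∑ i ∈ Finset.Icc 1 n, ∑ k ∈ Finset.Icc 2 i, d i (4 * i - k) + (d 1 2 + d 3 8) := by
    have hs : Finset.Icc 1 n = Finset.Icc 1 3 ∪ Finset.Icc 4 n := by
      ext; simp; omega
    have hd : Disjoint (Finset.Icc 1 3) (Finset.Icc 4 n) := by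
      rw [Finset.disjoint_left]; intro a; simp; omega
    rw [hs, Finset.sum_union hd, Finset.sum_union hd]
    have h4 : ∑ N ∈ Finset.Icc 4 n, ∑ k ∈ Finset.Icc 2 N, d N (k * (2 * N - k)) ≤
        ∑ i ∈ Finset.Icc 4 n, ∑ k ∈ Finset.Icc 2 i, d i (4 * i - k) :=
      Finset.sum_le_sum fun i hi => swap_le hmono (Finset.mem_Icc.1 hi).1
    have h3 : ∑ N ∈ Finset.Icc 1 3, ∑ k ∈ Finset.Icc 2 N, d N (k * (2 * N - k)) ≤
        ∑ i ∈ Finset.Icc 1 3, ∑ k ∈ Finset.Icc 2 i, d i (4 * i - k) + (d 1 2 + d 3 8) := by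
      -- `d 2 4 = d 1 4 + d 2 8 ≤ d 1 2 + d 2 6`; the term `d 3 8` is supplied directly.
      have e1 := hrec 1 4
      have e2 := hmono 1 2 le_rfl
      have e3 := hmono 2 6 (by omega)
      simp [Finset.sum_Icc_succ_top] at *
      omega
    omega
  have := slack_le hrec n
  omega
end

/-! ### Weakly increasing sequences -/

open Classical in
/-- The weakly increasing sequences `g` of `N` natural numbers with `e + 2 * ∑ g = n`. The
bounding box `[0, n] ^ N` serves only to make the set a `Finset`. -/
noncomputable def monoSeqs (n N e : ℕ) : Finset (Fin N → ℕ) :=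
  (Finset.Icc 0 (fun _ => n)).filter fun g => Monotone g ∧ e + 2 * ∑ i, g i = n

theorem mem_monoSeqs {n N e : ℕ} {g : Fin N → ℕ} :
    g ∈ monoSeqs n N e ↔ Monotone g ∧ e + 2 * ∑ i, g i = n := by
  rw [monoSeqs, Finset.mem_filter, and_iff_right_iff_imp]
  rintro ⟨-, h⟩
  refine Finset.mem_Icc.2 ⟨fun _ => Nat.zero_le _, fun i => ?_⟩
  have : g i ≤ ∑ j, g j := Finset.single_le_sum (fun _ _ => Nat.zero_le _) (Finset.mem_univ i)
  simp only
  omega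

/-- Either the smallest term is `0` and can be removed, or `1` can be subtracted from all
terms. -/
theorem card_monoSeqs_rec (n N e : ℕ) :
    (monoSeqs n (N + 1) e).card =
      (monoSeqs n N e).card + (monoSeqs n (N + 1) (e + 2 * (N + 1))).card := by
  have hsum (g : Fin (N + 1) → ℕ) : ∑ i, (g i + 1) = ∑ i, g i + (N + 1) := by
    simp [Finset.sum_add_distrib]
  rw [← Finset.card_filter_add_card_filter_not (fun g : Fin (N + 1) → ℕ => g 0 = 0)]
  congr 1
  · refine Finset.card_nbij' (fun g => Fin.tail g) (fun g => Fin.cons 0 g) ?_ ?_ ?_ ?_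
    · intro g hg
      simp only [Finset.coe_filter, Set.mem_ofPred_eq, Finset.mem_coe, mem_monoSeqs] at hg ⊢
      obtain ⟨⟨h1, h2⟩, h3⟩ := hg
      rw [Fin.sum_univ_succ, h3, zero_add] at h2
      exact ⟨fun i j hij => h1 (Fin.succ_le_succ_iff.2 hij), h2⟩
    · intro g hg
      simp only [Finset.coe_filter, Set.mem_ofPred_eq, Finset.mem_coe, mem_monoSeqs] at hg ⊢
      refine ⟨⟨?_, by simpa [Fin.sum_univ_succ] using hg.2⟩, by simp⟩
      intro i j hij
      induction i using Fin.cases with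
      | zero => simp
      | succ i =>
        induction j using Fin.cases with
        | zero => simp at hij
        | succ j => simpa using hg.1 (Fin.succ_le_succ_iff.1 hij)
    · intro g hg
      simp only [Finset.coe_filter, Set.mem_ofPred_eq] at hg
      simp only
      rw [← hg.2, Fin.cons_self_tail]
    · intro g hg
      simp
  · refine Finset.card_nbij' (fun g i => g i - 1) (fun g i => g i + 1) ?_ ?_ ?_ ?_
    · intro g hg
      simp only [Finset.coe_filter, Set.mem_ofPred_eq, Finset.mem_coe, mem_monoSeqs] at hg ⊢
      obtain ⟨⟨h1, h2⟩, h3⟩ := hg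
      have hpos (i) : g i - 1 + 1 = g i := by
        have := h1 (Fin.zero_le i)
        omega
      have := hsum (fun i => g i - 1)
      simp only [hpos] at this
      exact ⟨fun i j hij => Nat.sub_le_sub_right (h1 hij) 1, by omega⟩
    · intro g hg
      simp only [Finset.coe_filter, Set.mem_ofPred_eq, Finset.mem_coe, mem_monoSeqs] at hg ⊢
      refine ⟨⟨fun i j hij => Nat.add_le_add_right (hg.1 hij) 1, ?_⟩, by omega⟩
      rw [hsum]
      omega
    · intro g hg
      simp only [Finset.coe_filter, Set.mem_ofPred_eq, mem_monoSeqs] at hg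
      funext i
      have := hg.1.1 (Fin.zero_le i)
      simp only
      omega
    · intro g hg
      simp

/-- Adding `1` to the last term is injective. -/
theorem card_monoSeqs_step (n N e : ℕ) (hN : 1 ≤ N) :
    (monoSeqs n N (e + 2)).card ≤ (monoSeqs n N e).card := by
  obtain ⟨N, rfl⟩ := Nat.exists_eq_add_of_le' hN
  refine Finset.card_le_card_of_injOn (fun g => g + Pi.single (Fin.last N) 1) ?_
    (fun g _ g' _ h => add_right_cancel h)
  intro g hg
  simp only [Finset.mem_coe, mem_monoSeqs] at hg ⊢
  refine ⟨hg.1.add ?_, ?_⟩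
  · intro i j hij
    by_cases hi : i = Fin.last N
    · subst hi
      rw [Fin.last_le_iff.1 hij]
    · simp [Pi.single_eq_of_ne hi]
  · simp only [Pi.add_apply, Finset.sum_add_distrib, Finset.sum_pi_single', Finset.mem_univ,
      if_true]
    omega

/-! ### Partitions as monotone sequences -/

open Classical in
/-- The multisets of parts of the partitions of `n` that satisfy `P`. -/
noncomputable def partitionParts (n : ℕ) (P : Multiset ℕ → Prop) : Finset (Multiset ℕ) :=
  (Finset.univ.filter fun p : n.Partition => P p.parts).image Nat.Partition.parts

theorem card_partitionParts (n : ℕ) (P : Multiset ℕ → Prop) :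
    (partitionParts n P).card = pcount n P := by
  classical
  rw [partitionParts, Finset.card_image_of_injective _ (fun p q h => Nat.Partition.ext h), pcount,
    Nat.card_eq_fintype_card, Fintype.card_subtype]

theorem mem_partitionParts {n : ℕ} {P : Multiset ℕ → Prop} {l : Multiset ℕ} :
    l ∈ partitionParts n P ↔ (∀ x ∈ l, 0 < x) ∧ l.sum = n ∧ P l := by
  simp only [partitionParts, Finset.mem_image, Finset.mem_filter, Finset.mem_univ, true_and]
  constructor
  · rintro ⟨p, hp, rfl⟩
    exact ⟨fun x hx => p.parts_pos hx, p.parts_sum, hp⟩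
  · rintro ⟨h1, h2, h3⟩
    exact ⟨⟨l, fun {i} hi => h1 i hi, h2⟩, h3, rfl⟩

theorem exists_monotone_map (l : Multiset ℕ) :
    ∃ f : Fin l.card → ℕ, Monotone f ∧ Finset.univ.val.map f = l := by
  have h : (l.sort (· ≤ ·)).length = l.card := Multiset.length_sort ..
  rw [← h]
  refine ⟨(l.sort (· ≤ ·)).get, ?_, ?_⟩
  · rw [← List.sortedLE_ofFn_iff, List.ofFn_get]
    exact (Multiset.pairwise_sort l (· ≤ ·)).sortedLE
  · rw [Fin.univ_val_map, List.ofFn_get, Multiset.sort_eq]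

theorem monotone_map_injective {N : ℕ} {f g : Fin N → ℕ} (hf : Monotone f) (hg : Monotone g)
    (h : Finset.univ.val.map f = Finset.univ.val.map g) : f = g := by
  rw [Fin.univ_val_map, Fin.univ_val_map, Multiset.coe_eq_coe] at h
  exact List.ofFn_injective (h.eq_of_sortedLE hf.sortedLE_ofFn hg.sortedLE_ofFn)

theorem count_map_le_one_iff {N : ℕ} (f : Fin N → ℕ) (a : ℕ) :
    (Finset.univ.val.map f).count a ≤ 1 ↔ ∀ i j, f i = a → f j = a → i = j := by
  rw [Multiset.count_map, ← Finset.filter_val, Finset.card_val, Finset.card_le_one]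
  simp only [Finset.mem_filter, Finset.mem_univ, true_and]
  constructor
  · intro h i j hi hj
    exact h i hi.symm j hj.symm
  · intro h i hi j hj
    exact h i j hi.symm hj.symm

/-! ### Minimal partitions -/

/-- The `i`-th part, in increasing order, of the minimal partition with `k` distinct odd parts
below its even parts: `1, 3, …, 2k - 1, 2k, 2k, …`, or `2, 2, …` when `k = 0`. -/
def baseA (k : ℕ) (i : ℕ) : ℕ := if k = 0 then 2 else if i < k then 2 * i + 1 else 2 * k

/-- The `i`-th part, in increasing order, of the minimal partition with `k` distinct even parts
below its odd parts: `2, 4, …, 2k, 2k + 1, 2k + 1, …`. -/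
def baseB (k : ℕ) (i : ℕ) : ℕ := if i < k then 2 * (i + 1) else 2 * k + 1

theorem sum_baseA_zero (N : ℕ) : ∑ i : Fin N, baseA 0 i = 2 * N := by
  simp [baseA, mul_comm]

theorem sum_baseA {N k : ℕ} (hk : 1 ≤ k) (h : k ≤ N) :
    ∑ i : Fin N, baseA k i = k * (2 * N - k) := by
  obtain ⟨m, rfl⟩ := Nat.exists_eq_add_of_le h
  rw [Fin.sum_univ_eq_sum_range (baseA k), Finset.sum_range_add]
  have h1 : ∀ k', k' ≤ k → ∑ i ∈ Finset.range k', baseA k i = k' * k' := by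
    intro k' hk'
    induction k' with
    | zero => simp
    | succ k' ih =>
      rw [Finset.sum_range_succ, ih (by omega), baseA, if_neg (by omega), if_pos (by omega)]
      ring
  have h2 : ∀ i, baseA k (k + i) = 2 * k := fun i => by
    rw [baseA, if_neg (by omega), if_neg (by omega)]
  rw [h1 k le_rfl]
  simp only [h2, Finset.sum_const, Finset.card_range, smul_eq_mul]
  rw [show 2 * (k + m) - k = k + 2 * m by omega]
  ring

theorem sum_baseB {N k : ℕ} (h : k ≤ N) :
    ∑ i : Fin N, baseB k i = N + k * (2 * N - k) := by
  obtain ⟨m, rfl⟩ := Nat.exists_eq_add_of_le h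
  rw [Fin.sum_univ_eq_sum_range (baseB k), Finset.sum_range_add]
  have h1 : ∀ k', k' ≤ k → ∑ i ∈ Finset.range k', baseB k i = k' * k' + k' := by
    intro k' hk'
    induction k' with
    | zero => simp
    | succ k' ih =>
      rw [Finset.sum_range_succ, ih (by omega), baseB, if_pos (by omega)]
      ring
  have h2 : ∀ i, baseB k (k + i) = 2 * k + 1 := fun i => by
    rw [baseB, if_neg (by omega)]
  rw [h1 k le_rfl]
  simp only [h2, Finset.sum_const, Finset.card_range, smul_eq_mul]
  rw [show 2 * (k + m) - k = k + 2 * m by omega]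
  ring

/-- A downward closed subset of `Fin N` with `k` elements is `{0, …, k - 1}`. -/
theorem lower_set_iff {N : ℕ} (p : Fin N → Prop) [DecidablePred p]
    (hp : ∀ i j, i ≤ j → p j → p i) (i : Fin N) :
    p i ↔ (i : ℕ) < (Finset.univ.filter p).card := by
  constructor
  · intro hi
    have : (Finset.Iic i).card ≤ (Finset.univ.filter p).card :=
      Finset.card_le_card fun j hj => by
        simpa using hp j i (Finset.mem_Iic.1 hj) hi
    rw [Fin.card_Iic] at this
    omega
  · intro hi
    by_contra hn
    have : (Finset.univ.filter p).card ≤ (Finset.Iio i).card :=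
      Finset.card_le_card fun j hj => by
        rw [Finset.mem_Iio]
        by_contra hji
        exact hn (hp i j (not_lt.1 hji) (by simpa using hj))
    rw [Fin.card_Iio] at this
    omega

/-! ### Upper bound for the left-hand side -/

/-- The parts, in increasing order, of a partition with distinct odd parts below all even parts
exceed those of a minimal partition by twice a weakly increasing sequence. -/
theorem exists_shape {N : ℕ} {f : Fin N → ℕ} (hf : Monotone f) (hpos : ∀ i, 0 < f i)
    (hdist : ∀ i j, Odd (f i) → f i = f j → i = j)
    (habove : ∀ i j, Even (f i) → Odd (f j) → f j < f i) :
    ∃ k ≤ N, ∃ g : Fin N → ℕ, Monotone g ∧ ∀ i : Fin N, f i = baseA k i + 2 * g i := by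
  classical
  -- As `f` increases and odd values lie below even ones, the odd values come first.
  have hlow := lower_set_iff (fun i => Odd (f i)) (fun i j hij hj => by
    by_contra hi
    have := habove i j (Nat.not_odd_iff_even.1 hi) hj
    have := hf hij
    omega)
  set k := (Finset.univ.filter fun i => Odd (f i)).card with hk
  have hkN : k ≤ N := by simpa using Finset.card_le_univ (Finset.univ.filter fun i => Odd (f i))
  have hodd : ∀ i : Fin N, (i : ℕ) < k → f i % 2 = 1 := fun i hi =>
    Nat.odd_iff.1 ((hlow i).2 hi)
  have heven : ∀ i : Fin N, k ≤ (i : ℕ) → f i % 2 = 0 := fun i hi => by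
    have := (hlow i).not.2 (by omega)
    rwa [Nat.not_odd_iff] at this
  -- Consecutive odd values are distinct and of equal parity, so they differ by at least `2`.
  have hgap : ∀ c : ℕ, ∀ i j : Fin N, (j : ℕ) < k → (j : ℕ) = i + c → f i + 2 * c ≤ f j := by
    intro c
    induction c with
    | zero =>
      intro i j _ hij
      rw [Fin.ext (show (j : ℕ) = i by omega)]
      omega
    | succ c ih =>
      intro i j hj hij
      have h0 : (i : ℕ) + c < N := by omega
      have h1 := ih i ⟨i + c, h0⟩ (by simp only; omega) rfl
      have h2 : f ⟨i + c, h0⟩ ≤ f j := hf (by rw [Fin.le_def]; simp only; omega)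
      have h3 : f ⟨i + c, h0⟩ ≠ f j := fun h => by
        have := hdist _ _ ((hlow _).2 (by simp only; omega)) h
        rw [Fin.ext_iff] at this
        simp only at this
        omega
      have := hodd j hj
      have := hodd ⟨i + c, h0⟩ (by simp only; omega)
      omega
  have hlt : ∀ i j : Fin N, (i : ℕ) < k → k ≤ (j : ℕ) → f i < f j := fun i j hi hj =>
    habove j i (Nat.even_iff.2 (heven j hj)) (Nat.odd_iff.2 (hodd i hi))
  have hlow_bound : ∀ i : Fin N, (i : ℕ) < k → 2 * (i : ℕ) + 1 ≤ f i := fun i hi => by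
    have := hgap i ⟨0, by omega⟩ i hi (by simp)
    have := hpos ⟨0, by omega⟩
    omega
  have hcross : ∀ i j : Fin N, (i : ℕ) < k → k ≤ (j : ℕ) → f i + 2 * (k - 1 - i) < f j := by
    intro i j hi hj
    have h0 : k - 1 < N := by omega
    have h1 := hgap (k - 1 - i) i ⟨k - 1, h0⟩ (by simp only; omega) (by simp only; omega)
    have h2 := hlt ⟨k - 1, h0⟩ j (by simp only; omega) hj
    omega
  have hbase : ∀ i : Fin N, baseA k i ≤ f i ∧ baseA k i % 2 = f i % 2 := by
    intro i
    have h0 := hpos i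
    unfold baseA
    split_ifs with h1 h2
    · have := heven i (by omega)
      omega
    · have := hodd i h2
      have := hlow_bound i h2
      omega
    · have := heven i (by omega)
      have := hcross ⟨0, by omega⟩ i (by simp only; omega) (by omega)
      have := hpos ⟨0, by omega⟩
      simp only at *
      omega
  refine ⟨k, hkN, fun i : Fin N => (f i - baseA k i) / 2, ?_, fun i => ?_⟩
  · intro i j hij
    refine Nat.div_le_div_right ?_
    have h0 := hf hij
    have hi := (hbase i).1
    have hj := (hbase j).1
    rw [Fin.le_def] at hij
    unfold baseA at *
    split_ifs at * with h1 h2 h3 h3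
    · omega
    · have := hgap (j - i) i j h3 (by omega)
      omega
    · have := hcross i j h2 (by omega)
      omega
    · omega
    · omega
  · have := hbase i
    simp only
    omega

theorem pcount_A_le {n : ℕ} (hn : 1 ≤ n) :
    pcount n (fun l => oddDistinct l ∧ evenAbove l) ≤
      ∑ N ∈ Finset.Icc 1 n, ((monoSeqs n N (2 * N)).card +
        ∑ k ∈ Finset.Icc 1 N, (monoSeqs n N (k * (2 * N - k))).card) := by
  classical
  rw [← card_partitionParts]
  let T : Finset (Σ N : ℕ, Σ _ : ℕ, (Fin N → ℕ)) :=
    (Finset.Icc 1 n).sigma fun N => (Finset.range (N + 1)).sigma fun k =>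
      monoSeqs n N (∑ i : Fin N, baseA k i)
  have hT : T.card = ∑ N ∈ Finset.Icc 1 n, ((monoSeqs n N (2 * N)).card +
        ∑ k ∈ Finset.Icc 1 N, (monoSeqs n N (k * (2 * N - k))).card) := by
    rw [Finset.card_sigma]
    refine Finset.sum_congr rfl fun N _ => ?_
    rw [Finset.card_sigma, Finset.range_eq_Ico, Finset.sum_eq_sum_Ico_succ_bot (by omega),
      sum_baseA_zero]
    congr 1
    refine Finset.sum_congr rfl fun k hk => ?_
    rw [Finset.mem_Icc] at hk
    rw [sum_baseA (by omega) (by omega)]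
  rw [← hT]
  refine (Finset.card_le_card (t := T.image fun x =>
    Finset.univ.val.map fun i : Fin x.1 => baseA x.2.1 i + 2 * x.2.2 i) ?_).trans Finset.card_image_le
  intro l hl
  obtain ⟨hpos, hsum, hdist, habove⟩ := mem_partitionParts.1 hl
  obtain ⟨f, hf, hfl⟩ := exists_monotone_map l
  have hmem : ∀ i, f i ∈ l := fun i => by
    rw [← hfl]; exact Multiset.mem_map_of_mem f (Finset.mem_univ i)
  obtain ⟨k, hk, g, hg, hfg⟩ := exists_shape hf (fun i => hpos _ (hmem i))
    (fun i j hi hij => by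
      have := hdist _ hi
      rw [← hfl] at this
      exact (count_map_le_one_iff f _).1 this i j rfl hij.symm)
    (fun i j hi hj => habove _ (hmem i) _ (hmem j) hi hj)
  have hs : ∑ i, f i = n := by
    rw [← hsum, ← congrArg Multiset.sum hfl]; rfl
  have h1 : 1 ≤ l.card := by
    rw [Nat.one_le_iff_ne_zero, Ne, Multiset.card_eq_zero]
    rintro rfl
    simp at hsum
    omega
  have h2 : l.card ≤ n := by
    have : ∑ i : Fin l.card, 1 ≤ ∑ i, f i := Finset.sum_le_sum fun i _ => hpos _ (hmem i)
    rw [hs] at this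
    simpa using this
  refine Finset.mem_image.2 ⟨⟨l.card, k, g⟩, ?_, ?_⟩
  · simp only [T, Finset.mem_sigma, Finset.mem_Icc, Finset.mem_range]
    refine ⟨⟨h1, h2⟩, by omega, mem_monoSeqs.2 ⟨hg, ?_⟩⟩
    rw [Finset.mul_sum, ← Finset.sum_add_distrib, ← hs]
    exact Finset.sum_congr rfl fun i _ => (hfg i).symm
  · simp only [← hfg]
    exact hfl

/-! ### Lower bound for the right-hand side -/

theorem even_baseB {k i a : ℕ} : Even (baseB k i + 2 * a) ↔ i < k := by
  unfold baseB
  rw [Nat.even_iff]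
  split_ifs with h <;> omega

/-- In a sequence `baseB k + 2 * g`, each even part is strictly below all later parts. -/
theorem baseB_lt {N k : ℕ} {g : Fin N → ℕ} (hg : Monotone g) {i j : Fin N} (hij : i < j)
    (hi : (i : ℕ) < k) : baseB k i + 2 * g i < baseB k j + 2 * g j := by
  have h := hg hij.le
  rw [Fin.lt_def] at hij
  unfold baseB
  split_ifs <;> omega

theorem monotone_baseB {N k : ℕ} {g : Fin N → ℕ} (hg : Monotone g) :
    Monotone fun i : Fin N => baseB k i + 2 * g i := by
  intro i j hij
  have h := hg hij
  rw [Fin.le_def] at hij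
  simp only [baseB]
  split_ifs <;> omega

theorem le_pcount_B (n M : ℕ) :
    ∑ N ∈ Finset.Icc 1 M, ∑ k ∈ Finset.range (N + 1),
        (monoSeqs n N (N + k * (2 * N - k))).card ≤
      pcount n (fun l => evenDistinct l ∧ oddAbove l) := by
  classical
  rw [← card_partitionParts]
  let T : Finset (Σ N : ℕ, Σ _ : ℕ, (Fin N → ℕ)) :=
    (Finset.Icc 1 M).sigma fun N => (Finset.range (N + 1)).sigma fun k =>
      monoSeqs n N (∑ i : Fin N, baseB k i)
  have hT : T.card = ∑ N ∈ Finset.Icc 1 M, ∑ k ∈ Finset.range (N + 1),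
        (monoSeqs n N (N + k * (2 * N - k))).card := by
    rw [Finset.card_sigma]
    refine Finset.sum_congr rfl fun N _ => ?_
    rw [Finset.card_sigma]
    refine Finset.sum_congr rfl fun k hk => ?_
    rw [Finset.mem_range] at hk
    rw [sum_baseB (by omega)]
  have hmem : ∀ x ∈ T, x.2.1 ≤ x.1 ∧ Monotone x.2.2 ∧
      ∑ i : Fin x.1, (baseB x.2.1 i + 2 * x.2.2 i) = n := by
    intro x hx
    simp only [T, Finset.mem_sigma, Finset.mem_range, mem_monoSeqs] at hx
    refine ⟨by omega, hx.2.2.1, ?_⟩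
    rw [Finset.sum_add_distrib, ← Finset.mul_sum]
    exact hx.2.2.2
  rw [← hT]
  refine Finset.card_le_card_of_injOn
    (fun x => Finset.univ.val.map fun i : Fin x.1 => baseB x.2.1 i + 2 * x.2.2 i) ?_ ?_
  · rintro ⟨N, k, g⟩ hx
    obtain ⟨hk, hg, hs⟩ := hmem _ hx
    simp only at hk hg hs
    refine mem_partitionParts.2 ⟨?_, hs, ?_, ?_⟩
    · intro x hx
      obtain ⟨i, -, rfl⟩ := Multiset.mem_map.1 hx
      unfold baseB
      split_ifs <;> omega
    · intro a ha
      rw [count_map_le_one_iff]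
      intro i j hi hj
      have hik : (i : ℕ) < k := even_baseB.1 (hi ▸ ha)
      have hjk : (j : ℕ) < k := even_baseB.1 (hj ▸ ha)
      obtain h | h | h := lt_trichotomy i j
      · exact absurd (hi.trans hj.symm) (baseB_lt hg h hik).ne
      · exact h
      · exact absurd (hj.trans hi.symm) (baseB_lt hg h hjk).ne
    · intro a ha b hb hoa heb
      obtain ⟨i, -, rfl⟩ := Multiset.mem_map.1 ha
      obtain ⟨j, -, rfl⟩ := Multiset.mem_map.1 hb
      have hi := even_baseB.not.1 (Nat.not_even_iff_odd.2 hoa)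
      have hj := even_baseB.1 heb
      exact baseB_lt hg (Fin.lt_def.2 (by omega)) hj
  · rintro ⟨N, k, g⟩ hx ⟨N', k', g'⟩ hx' h
    obtain ⟨hk, hg, -⟩ := hmem _ hx
    obtain ⟨hk', hg', -⟩ := hmem _ hx'
    simp only at hk hg hk' hg' h
    obtain rfl : N = N' := by simpa using congrArg Multiset.card h
    have hf := monotone_map_injective (monotone_baseB hg) (monotone_baseB hg') h
    have hfi (i : Fin N) : baseB k i + 2 * g i = baseB k' i + 2 * g' i := congrFun hf i
    have hkk (i : Fin N) : (i : ℕ) < k ↔ (i : ℕ) < k' := by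
      rw [← even_baseB (a := g i), hfi i, even_baseB]
    -- The number of even parts recovers `k`.
    obtain rfl : k = k' := by
      by_contra hne
      obtain h | h := lt_or_gt_of_ne hne
      · have := hkk ⟨k, by omega⟩
        simp only at this
        omega
      · have := hkk ⟨k', by omega⟩
        simp only at this
        omega
    obtain rfl : g = g' := funext fun i => by have := hfi i; omega
    rfl

theorem monoSeqs_two_nonempty {n e : ℕ} (h : e ≤ n) (hp : e % 2 = n % 2) :
    0 < (monoSeqs n 2 e).card := by
  refine Finset.card_pos.2 ⟨![0, (n - e) / 2], mem_monoSeqs.2 ⟨?_, ?_⟩⟩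
  · intro i j hij
    fin_cases i <;> fin_cases j <;> simp at hij ⊢
  · simp
    omega

theorem stmt3 (n : ℕ) (hn : 5 ≤ n) :
    pcount n (fun l => oddDistinct l ∧ evenAbove l) <
      pcount n (fun l => evenDistinct l ∧ oddAbove l) := by
  have hA := pcount_A_le (n := n) (by omega)
  have hB := le_pcount_B n (2 * n)
  have hw := weighted_le (d := fun N e => (monoSeqs n N e).card) (card_monoSeqs_rec n)
    (card_monoSeqs_step n) (n := n) (by omega)
  have hpos : 0 < (monoSeqs n 2 5).card + (monoSeqs n 2 6).card := by
    obtain h | h := Nat.mod_two_eq_zero_or_one n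
    · have := monoSeqs_two_nonempty (n := n) (e := 6) (by omega) (by omega)
      omega
    · have := monoSeqs_two_nonempty (n := n) (e := 5) (by omega) (by omega)
      omega
  omega
end

section
/- For all n ≥ 8, the number of partitions of n with even parts distinct, odd parts distinct, and all even parts greater than all odd parts, is strictly less than the number of partitions of n with odd parts distinct, even parts unrestricted, and all odd parts greater than all even parts. -/
/-! ### Partitions into parts of bounded size -/

/-- `R N t` is the coefficient of `q ^ t` in `1 / ((1 - q ^ 2) (1 - q ^ 4) ⋯ (1 - q ^ (2 N)))`. The
argument is an integer, so that the value is `0` at negative `t` and exponents can be subtracted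
freely; it is also `0` at odd `t`. -/
noncomputable def R : ℕ → ℤ → ℤ
  | 0, t => if t = 0 then 1 else 0
  | N + 1, t => if t < 0 then 0 else R N t + R (N + 1) (t - 2 * (N + 1))
termination_by N t => (N, (t + 1).toNat)
decreasing_by
  · exact Prod.Lex.left _ _ (Nat.lt_succ_self N)
  · have h : (t - 2 * ((N : ℤ) + 1) + 1).toNat < (t + 1).toNat := by omega
    exact Prod.Lex.right _ h

theorem R_zero (t : ℤ) : R 0 t = if t = 0 then 1 else 0 := by
  rw [R]

theorem R_neg (N : ℕ) (t : ℤ) (ht : t < 0) : R N t = 0 := by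
  cases N with
  | zero => rw [R_zero, if_neg (by omega)]
  | succ N => rw [R, if_pos ht]

theorem R_succ (N : ℕ) (t : ℤ) :
    R (N + 1) t = R N t + R (N + 1) (t - 2 * (N + 1)) := by
  by_cases ht : t < 0
  · rw [R_neg _ _ ht, R_neg _ _ ht, R_neg _ _ (by omega)]; rfl
  · conv_lhs => rw [R, if_neg ht]

/-- Induction on `t : ℤ` in steps of a positive amount `c`, with all negative `t` as base. -/
theorem int_ind {p : ℤ → Prop} (c : ℤ) (hc : 0 < c) (neg : ∀ t < 0, p t)
    (step : ∀ t, p (t - c) → p t) (t : ℤ) : p t := by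
  have key : ∀ j : ℕ, ∀ t : ℤ, t < j → p t := by
    intro j
    induction j with
    | zero => intro t ht; exact neg t (by simpa using ht)
    | succ j ih => intro t ht; exact step t (ih _ (by push_cast at ht; omega))
  exact key (t.toNat + 1) t (by omega)

theorem R_nonneg (N : ℕ) (t : ℤ) : 0 ≤ R N t := by
  induction N generalizing t with
  | zero => rw [R_zero]; split <;> norm_num
  | succ N ih =>
    induction t using int_ind (c := 2 * (N + 1)) (by positivity) with
    | neg t ht => rw [R_neg _ _ ht]
    | step t h => rw [R_succ]; exact add_nonneg (ih t) h

/-- `D N t` is the coefficient of `q ^ t` in `(1 - q ^ 2)` times the series of `R N`; for `1 ≤ N` this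
is `1 / ((1 - q ^ 4) ⋯ (1 - q ^ (2 N)))`. -/
noncomputable def D (N : ℕ) (t : ℤ) : ℤ := R N t - R N (t - 2)

theorem D_neg (N : ℕ) (t : ℤ) (ht : t < 0) : D N t = 0 := by
  rw [D, R_neg _ _ ht, R_neg _ _ (by omega)]; rfl

theorem D_one (t : ℤ) : D 1 t = if t = 0 then 1 else 0 := by
  have := R_succ 0 t
  norm_num at this
  rw [D, this, R_zero]; ring

theorem D_succ (N : ℕ) (t : ℤ) :
    D (N + 1) t = D N t + D (N + 1) (t - 2 * (N + 1)) := by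
  have h1 := R_succ N t
  have h2 := R_succ N (t - 2)
  rw [show t - 2 - 2 * ((N : ℤ) + 1) = t - 2 * (N + 1) - 2 by ring] at h2
  simp only [D]; linarith

theorem D_nonneg (N : ℕ) (hN : 1 ≤ N) (t : ℤ) : 0 ≤ D N t := by
  induction N, hN using Nat.le_induction generalizing t with
  | base => rw [D_one]; split <;> norm_num
  | succ N hN ih =>
    induction t using int_ind (c := 2 * (N + 1)) (by positivity) with
    | neg t ht => rw [D_neg _ _ ht]
    | step t h => rw [D_succ]; exact add_nonneg (ih t) h

theorem D_mono (M N : ℕ) (hMN : M ≤ N) (t : ℤ) : D M t ≤ D N t := by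
  induction N, hMN using Nat.le_induction with
  | base => exact le_rfl
  | succ N hN ih =>
    rw [D_succ]
    have := D_nonneg (N + 1) (by omega) (t - 2 * (N + 1))
    omega

/-- Adjoining a part `2 h`, with `2 ≤ h ≤ N`, is injective on partitions into parts
`4, 6, …, 2 N`. -/
theorem D_shift (N h : ℕ) (h2 : 2 ≤ h) (hN : h ≤ N) (t : ℤ) :
    D N (t - 2 * h) ≤ D N t := by
  induction N, hN using Nat.le_induction generalizing t with
  | base =>
    obtain ⟨h, rfl⟩ : ∃ j, h = j + 1 := ⟨h - 1, by omega⟩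
    rw [D_succ h t]
    have := D_nonneg h (by omega) t
    push_cast
    linarith
  | succ N hN ih =>
    induction t using int_ind (c := 2 * (N + 1)) (by positivity) with
    | neg t ht => rw [D_neg _ _ ht, D_neg _ _ (by omega)]
    | step t hh =>
      rw [D_succ N t, D_succ N (t - 2 * h)]
      rw [show t - 2 * (h : ℤ) - 2 * ((N : ℤ) + 1) = t - 2 * (N + 1) - 2 * h by ring]
      exact add_le_add (ih t) hh

theorem D_two (j : ℕ) (t : ℤ) (ht : t = 4 * j) : 1 ≤ D 2 t := by
  subst ht
  induction j with
  | zero =>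
    rw [D_succ, D_one, D_neg _ _ (by norm_num)]; norm_num
  | succ j ih =>
    rw [D_succ, show (4 * ((j + 1 : ℕ) : ℤ)) - 2 * (((1 : ℕ) : ℤ) + 1) = 4 * j by
      push_cast; ring]
    have := D_nonneg 1 le_rfl (4 * ((j + 1 : ℕ) : ℤ))
    exact ih.trans (le_add_of_nonneg_left this)

theorem D_two_le (t : ℤ) : D 2 t ≤ 1 := by
  induction t using int_ind (c := 4) (by positivity) with
  | neg t ht => rw [D_neg _ _ ht]; norm_num
  | step t h =>
    by_cases h0 : t = 0
    · rw [D_succ, D_one, D_neg _ _ (by subst h0; norm_num)]; split <;> norm_num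
    · rw [D_succ, D_one, if_neg h0]; norm_num; exact h

theorem D_two_zero (t : ℤ) (h : t % 4 ≠ 0) : D 2 t = 0 := by
  induction t using int_ind (c := 4) (by positivity) with
  | neg t ht => rw [D_neg _ _ ht]
  | step t ih =>
    rw [D_succ, D_one, if_neg (by omega)]; norm_num; exact ih (by omega)

theorem R_mono (N : ℕ) (hN : 1 ≤ N) (s t : ℤ) (hst : s ≤ t) (hpar : Even (t - s)) :
    R N s ≤ R N t := by
  obtain ⟨j, hj⟩ := hpar
  obtain ⟨j, rfl⟩ := Int.eq_ofNat_of_zero_le (show 0 ≤ j by omega)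
  obtain rfl : t = s + 2 * j := by linarith
  clear hst hj
  induction j with
  | zero => simp
  | succ j ih =>
    have := D_nonneg N hN (s + 2 * (j + 1 : ℕ))
    rw [D, show s + 2 * ((j + 1 : ℕ) : ℤ) - 2 = s + 2 * j by push_cast; ring] at this
    linarith

/-! ### Comparison for a fixed number of parts -/

/-- The least sum of `k` odd and `m` even parts, all distinct, with the even parts on top: the parts
are `1, 3, …, 2 k - 1, 2 k, 2 k + 2, …` if `k ≠ 0`, and `2, 4, …, 2 m` if `k = 0`. -/
def eA (k m : ℕ) : ℤ := if k = 0 then m * (m + 1) else (k + m) ^ 2 - m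

/-- The least sum of `k` distinct odd and `m` arbitrary positive even parts, with the odd parts on
top: the parts are `2, …, 2, 3, 5, …, 2 k + 1` if `m ≠ 0`, and `1, 3, …, 2 k - 1` if `m = 0`. -/
def eB (k m : ℕ) : ℤ := if m = 0 then k ^ 2 else k ^ 2 + 2 * (k + m)

/-- The number of odd-above-even partitions of `t` into `N` parts minus that of even-above-odd
partitions of `t` into `N` parts, as given by the generating functions. -/
noncomputable def gap (N : ℕ) (t : ℤ) : ℤ :=
  ∑ k ∈ Finset.range (N + 1), (R N (t - eB k (N - k)) - R N (t - eA k (N - k)))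

/-- The extreme values `k = 0` and `k = M + 1` are separated from the sum; the terms for `k = M + 2`
cancel. -/
theorem gap_eq (M : ℕ) (t : ℤ) : gap (M + 2) t =
    (R (M + 2) (t - 2 * (M + 2)) - R (M + 2) (t - (M + 2) * (M + 3))) +
    ∑ k ∈ Finset.range M, (R (M + 2) (t - ((k + 1) ^ 2 + 2 * (M + 2)))
      - R (M + 2) (t - ((M + 2) ^ 2 - (M + 1 - k)))) +
    (R (M + 2) (t - ((M + 2) ^ 2 + 1)) - R (M + 2) (t - ((M + 2) ^ 2 - 1))) := by
  rw [gap, Finset.sum_range_succ, Finset.sum_range_succ, Finset.sum_range_succ']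
  have e1 : ∑ k ∈ Finset.range M, (R (M + 2) (t - eB (k + 1) (M + 2 - (k + 1)))
      - R (M + 2) (t - eA (k + 1) (M + 2 - (k + 1)))) =
      ∑ k ∈ Finset.range M, (R (M + 2) (t - ((k + 1) ^ 2 + 2 * (M + 2)))
      - R (M + 2) (t - ((M + 2) ^ 2 - (M + 1 - k)))) := by
    apply Finset.sum_congr rfl
    intro k hk
    rw [Finset.mem_range] at hk
    obtain ⟨j, rfl⟩ : ∃ j, M = k + j + 1 := ⟨M - k - 1, by omega⟩
    rw [show k + j + 1 + 2 - (k + 1) = j + 2 by omega, eA, eB, if_neg (by omega),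
      if_neg (by omega)]
    push_cast
    congr 2 <;> ring
  rw [e1, show M + 2 - 0 = M + 2 by omega, show M + 2 - (M + 1) = 1 by omega,
    show M + 2 - (M + 2) = 0 by omega]
  generalize (∑ k ∈ Finset.range M, _ : ℤ) = X
  simp [eA, eB]
  ring_nf

/-- For `1 ≤ k ≤ N - 2`, where `N = M + 2`, the least sum with odd parts on top is at most the least
sum with even parts on top. -/
theorem gap_mid (M : ℕ) (k : ℕ) (hk : k < M) (t : ℤ) :
    0 ≤ (R (M + 2) (t - ((k + 1) ^ 2 + 2 * (M + 2)))
      - R (M + 2) (t - ((M + 2) ^ 2 - (M + 1 - k)))) := by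
  rw [sub_nonneg]
  obtain ⟨j, rfl⟩ : ∃ j, M = k + j + 1 := ⟨M - k - 1, by omega⟩
  apply R_mono _ (by omega)
  · push_cast; nlinarith
  · push_cast
    rw [show t - (((k : ℤ) + 1) ^ 2 + 2 * (k + j + 1 + 2))
      - (t - ((k + j + 1 + 2) ^ 2 - (k + j + 1 + 1 - k)))
       = j * (j + 1) + 2 * (k * j + k + j) by ring]
    exact (Int.even_mul_succ_self _).add (even_two_mul _)

/-- For odd `N` the term `k = N - 1` of one family is paired with `k = 0` of the other, which has the
same parity. -/
theorem gap_odd (j : ℕ) (t : ℤ) : 0 ≤ gap (2 * j + 3) t := by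
  rw [gap_eq (2 * j + 1)]
  have h1 := Finset.sum_nonneg fun k hk =>
    gap_mid (2 * j + 1) k (Finset.mem_range.1 hk) t
  have h2 := R_mono (2 * j + 1 + 2) (by omega) (t - (((2 * j + 1 : ℕ) + 2) ^ 2 - 1))
    (t - 2 * ((2 * j + 1 : ℕ) + 2)) (by push_cast; nlinarith)
    ⟨2 * j ^ 2 + 4 * j + 1, by push_cast; ring⟩
  have h3 := R_mono (2 * j + 1 + 2) (by omega)
    (t - ((2 * j + 1 : ℕ) + 2) * ((2 * j + 1 : ℕ) + 3))
    (t - (((2 * j + 1 : ℕ) + 2) ^ 2 + 1)) (by push_cast; nlinarith)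
    ⟨j + 1, by push_cast; ring⟩
  linarith

/-- For even `N ≥ 4` the deficit `D N (t - (N ^ 2 - 1))` at `k = N - 1` is absorbed by the surplus at
`k = 1`, after adjoining a part `N`. -/
theorem gap_even (j : ℕ) (t : ℤ) : 0 ≤ gap (2 * j + 4) t := by
  rw [gap_eq (2 * j + 2), Finset.sum_range_succ']
  have h1 := Finset.sum_nonneg fun k (hk : k ∈ Finset.range (2 * j + 1)) =>
    gap_mid (2 * j + 2) (k + 1) (by have := Finset.mem_range.1 hk; omega) t
  have h2 := R_mono (2 * j + 2 + 2) (by omega)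
    (t - ((2 * j + 2 : ℕ) + 2) * ((2 * j + 2 : ℕ) + 3))
    (t - 2 * ((2 * j + 2 : ℕ) + 2)) (by push_cast; nlinarith)
    ⟨2 * j ^ 2 + 7 * j + 6, by push_cast; ring⟩
  have h3 := R_mono (2 * j + 2 + 2) (by omega)
    (t - (2 * j + 4) ^ 2 + 1 + 2 * (j + 2 : ℕ))
    (t - ((((0 : ℕ) : ℤ) + 1) ^ 2 + 2 * ((2 * j + 2 : ℕ) + 2))) (by push_cast; nlinarith)
    ⟨2 * j ^ 2 + 5 * j + 1, by push_cast; ring⟩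
  -- With `N = 2 * j + 4`, a part of size `N` is adjoined; `h3` bounds the result by the term `k = 1`.
  have h4 := D_shift (2 * j + 2 + 2) (j + 2) (by omega) (by omega)
    (t - (2 * j + 4) ^ 2 + 1 + 2 * (j + 2 : ℕ))
  simp only [D] at h4
  push_cast at *
  ring_nf at *
  linarith

/-- The part `6` is adjoined on the right-hand summand; partitions into parts `4` only are not hit. -/
theorem D_four (t : ℤ) : D 2 t + D 4 (t - 6) ≤ D 4 t := by
  have h1 := D_succ 3 t
  have h2 := D_succ 2 t
  have h3 := D_succ 3 (t - 6)
  have h4 := D_shift 4 3 (by omega) (by omega) (t - 8)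
  norm_num at *
  rw [show t - 8 - 6 = t - 6 - 8 by ring] at h4
  linarith

theorem gap_one (t : ℤ) : gap 1 t = 0 := by
  simp [gap, Finset.sum_range_succ, eA, eB]

theorem gap_zero (t : ℤ) : gap 0 t = 0 := by
  simp [gap, eA, eB]

theorem gap_two (t : ℤ) : gap 2 t = D 2 (t - 4) - D 2 (t - 3) := by
  have := gap_eq 0 t
  norm_num at this
  rw [this, D, D]; ring_nf

theorem gap_three (t : ℤ) : gap 3 t = D 3 (t - 6) + D 3 (t - 10) := by
  have := gap_eq 1 t
  norm_num at this
  rw [this, D, D]; ring_nf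

theorem gap_four (t : ℤ) : D 2 (t - 9) + D 4 (t - 11) ≤ gap 4 t := by
  have := gap_eq 2 t
  norm_num [Finset.sum_range_succ] at this
  have h2 := D_four (t - 9)
  have h3 := R_mono 4 (by omega) (t - 20) (t - 8) (by omega) ⟨6, by ring⟩
  have h4 := R_mono 4 (by omega) (t - 14) (t - 12) (by omega) ⟨1, by ring⟩
  simp only [D] at *
  ring_nf at *
  linarith

theorem gap_five (t : ℤ) : D 5 (t - 11) ≤ gap 5 t := by
  have := gap_eq 3 t
  norm_num [Finset.sum_range_succ] at this
  have h3 := R_mono 5 (by omega) (t - 30) (t - 26) (by omega) ⟨2, by ring⟩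
  have h4 := R_mono 5 (by omega) (t - 24) (t - 10) (by omega) ⟨7, by ring⟩
  have h5 := R_mono 5 (by omega) (t - 22) (t - 14) (by omega) ⟨4, by ring⟩
  have h6 := R_mono 5 (by omega) (t - 23) (t - 19) (by omega) ⟨2, by ring⟩
  have h7 := R_mono 5 (by omega) (t - 21) (t - 13) (by omega) ⟨4, by ring⟩
  simp only [D] at *
  ring_nf at *
  linarith

theorem gap_nonneg (N : ℕ) (hN : N ≠ 2) (t : ℤ) : 0 ≤ gap N t := by
  obtain rfl | rfl | ⟨j, rfl⟩ | ⟨j, rfl⟩ : N = 0 ∨ N = 1 ∨ (∃ j, N = 2 * j + 3) ∨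
      ∃ j, N = 2 * j + 4 := by
    by_cases h0 : N = 0
    · exact .inl h0
    by_cases h1 : N = 1
    · exact .inr (.inl h1)
    rcases Nat.even_or_odd' N with ⟨j, hj | hj⟩
    · exact .inr (.inr (.inr ⟨j - 2, by omega⟩))
    · exact .inr (.inr (.inl ⟨j - 1, by omega⟩))
  · rw [gap_zero]
  · rw [gap_one]
  · exact gap_odd j t
  · exact gap_even j t

/-- Only `N = 2` can contribute negatively, by at most `1` and only if `n % 4 = 3`. The terms that
outweigh this are `N = 4` and `N = 5` if `n % 4 = 3`, and the surplus comes from `N = 2, 4, 3` if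
`n % 4 = 0, 1, 2`. -/
theorem gap_sum_pos (n : ℕ) (hn : 8 ≤ n) : 0 < ∑ N ∈ Finset.range (n + 1), gap N n := by
  have hsub : ∑ N ∈ Finset.range 6, gap N n ≤ ∑ N ∈ Finset.range (n + 1), gap N n := by
    apply Finset.sum_le_sum_of_subset_of_nonneg
    · intro x; simp only [Finset.mem_range]; omega
    · intro N _ h
      rw [Finset.mem_range] at h
      exact gap_nonneg N (by omega) n
  refine lt_of_lt_of_le ?_ hsub
  simp only [Finset.sum_range_succ, Finset.sum_range_zero, gap_zero, gap_one]
  have h2 := gap_two n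
  have h3 := gap_three n
  have h4 := gap_four n
  have h5 := gap_five n
  have p1 := D_mono 2 3 (by omega) ((n : ℤ) - 6)
  have p2 := D_nonneg 3 (by omega) ((n : ℤ) - 10)
  have p3 := D_nonneg 3 (by omega) ((n : ℤ) - 6)
  have p4 := D_nonneg 2 (by omega) ((n : ℤ) - 9)
  have p5 := D_mono 2 4 (by omega) ((n : ℤ) - 11)
  have p6 := D_mono 2 5 (by omega) ((n : ℤ) - 11)
  have p7 := D_nonneg 2 (by omega) ((n : ℤ) - 11)
  have p8 := D_nonneg 2 (by omega) ((n : ℤ) - 4)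
  have hmod : n % 4 = 0 ∨ n % 4 = 1 ∨ n % 4 = 2 ∨ n % 4 = 3 := by omega
  rcases hmod with h | h | h | h
  · have q1 := D_two (n / 4 - 1) ((n : ℤ) - 4) (by omega)
    have q2 := D_two_zero ((n : ℤ) - 3) (by omega)
    linarith
  · have q1 := D_two ((n - 9) / 4) ((n : ℤ) - 9) (by omega)
    have q2 := D_two_zero ((n : ℤ) - 3) (by omega)
    linarith
  · have q1 := D_two ((n - 6) / 4) ((n : ℤ) - 6) (by omega)
    have q2 := D_two_zero ((n : ℤ) - 3) (by omega)
    linarith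
  · have q1 := D_two ((n - 11) / 4) ((n : ℤ) - 11) (by omega)
    have q2 := D_two_le ((n : ℤ) - 3)
    linarith

/-! ### Counting by the numbers of odd and even parts -/

/-- The partitions of `t` with property `P`, `k` odd parts and `m` even parts, encoded by their
multisets of parts. -/
def ParitySet (P : Multiset ℕ → Prop) (k m : ℕ) (t : ℤ) : Set (Multiset ℕ) :=
  {s | (∀ x ∈ s, 0 < x) ∧ P s ∧ s.countP Odd = k ∧ s.card = k + m ∧ (s.sum : ℤ) = t}

theorem finite_pos_sum (n : ℕ) : {s : Multiset ℕ | (∀ x ∈ s, 0 < x) ∧ s.sum = n}.Finite := by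
  apply (Set.finite_range fun p : Nat.Partition n => p.parts).subset
  rintro s ⟨h, hs⟩
  exact ⟨⟨s, fun {i} hi => h i hi, hs⟩, rfl⟩

theorem ParitySet_finite (P : Multiset ℕ → Prop) (k m : ℕ) (t : ℤ) : (ParitySet P k m t).Finite := by
  apply (finite_pos_sum t.toNat).subset
  rintro s ⟨h, -, -, -, hs⟩
  exact ⟨h, by omega⟩

theorem pcount_eq (n : ℕ) (P : Multiset ℕ → Prop) :
    pcount n P = ∑ N ∈ Finset.range (n + 1), ∑ k ∈ Finset.range (N + 1),
      (ParitySet P k (N - k) n).ncard := by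
  classical
  have hfin : {s : Multiset ℕ | (∀ x ∈ s, 0 < x) ∧ P s ∧ s.sum = n}.Finite :=
    (finite_pos_sum n).subset fun s hs => ⟨hs.1, hs.2.2⟩
  have h1 : pcount n P = hfin.toFinset.card := by
    rw [← Set.ncard_eq_toFinset_card _ hfin, pcount, ← Nat.card_coe_set_eq]
    refine Nat.card_congr ⟨fun p => ⟨p.1.parts, fun x hx => p.1.parts_pos hx, p.2, p.1.parts_sum⟩,
      fun s => ⟨⟨s.1, fun {i} hi => s.2.1 i hi, s.2.2.2⟩, s.2.2.1⟩, fun p => rfl, fun s => rfl⟩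
  rw [h1, Finset.card_eq_sum_card_fiberwise (f := Multiset.card) (t := Finset.range (n + 1))]
  · apply Finset.sum_congr rfl
    intro N _
    rw [Finset.card_eq_sum_card_fiberwise (f := Multiset.countP Odd) (t := Finset.range (N + 1))]
    · apply Finset.sum_congr rfl
      intro k hk
      rw [Finset.mem_range] at hk
      rw [← Set.ncard_coe_finset]
      congr 1
      ext s
      simp only [Finset.coe_filter, Finset.mem_filter, Set.Finite.mem_toFinset, Set.mem_ofPred_eq,
        ParitySet, Nat.cast_inj]
      rw [show k + (N - k) = N by omega]
      tauto
    · intro s hs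
      simp only [Finset.coe_filter, Set.mem_ofPred_eq] at hs
      have := Multiset.countP_le_card Odd s
      simp only [Finset.coe_range, Set.mem_Iio]
      omega
  · intro s hs
    simp only [Set.Finite.coe_toFinset, Set.mem_ofPred_eq] at hs
    have := Multiset.card_nsmul_le_sum (s := s) (a := 1) fun x hx => hs.1 x hx
    simp only [Finset.coe_range, Set.mem_Iio]
    simp only [smul_eq_mul, mul_one] at this
    omega

/-! ### Adding two to every part -/

/-- The multiset obtained by adding `2` to every element. -/
def up (s : Multiset ℕ) : Multiset ℕ := s.map (· + 2)

theorem add_two_inj : Function.Injective (fun x : ℕ => x + 2) := fun _ _ h => by simpa using h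

theorem up_injective : Function.Injective up := Multiset.map_injective add_two_inj

theorem mem_up {x : ℕ} {s : Multiset ℕ} : x ∈ up s ↔ ∃ y ∈ s, y + 2 = x := by
  simp [up]

theorem exists_up {s : Multiset ℕ} (h : ∀ x ∈ s, 3 ≤ x) :
    ∃ u, (∀ x ∈ u, 0 < x) ∧ s = up u := by
  refine ⟨s.map (· - 2), ?_, ?_⟩
  · intro x hx
    obtain ⟨y, hy, rfl⟩ := Multiset.mem_map.1 hx
    have := h y hy
    omega
  · rw [up, Multiset.map_map]
    conv_lhs => rw [← Multiset.map_id s]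
    apply Multiset.map_congr rfl
    intro x hx
    have := h x hx
    simp; omega

theorem countP_up (s : Multiset ℕ) : (up s).countP Odd = s.countP Odd := by
  rw [up, Multiset.countP_map, Multiset.countP_eq_card_filter]
  congr 1
  apply Multiset.filter_congr
  intro x _
  simp [parity_simps]

theorem card_up (s : Multiset ℕ) : (up s).card = s.card := by simp [up]

theorem sum_up (s : Multiset ℕ) : (up s).sum = s.sum + 2 * s.card := by
  induction s using Multiset.induction with
  | empty => simp [up]
  | cons a s ih =>
    have : up (a ::ₘ s) = (a + 2) ::ₘ up s := by simp [up]
    rw [this, Multiset.sum_cons, ih]; simp; ring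

theorem evenAbove_up (s : Multiset ℕ) : evenAbove (up s) ↔ evenAbove s := by
  simp [evenAbove, up, parity_simps]

theorem oddAbove_up (s : Multiset ℕ) : oddAbove (up s) ↔ oddAbove s := by
  simp [oddAbove, up, parity_simps]

theorem nodup_up (s : Multiset ℕ) : (up s).Nodup ↔ s.Nodup :=
  Multiset.nodup_map_iff_of_injective add_two_inj

theorem oddDistinct_up {s : Multiset ℕ} (h : oddDistinct s) : oddDistinct (up s) := by
  intro a ha
  by_cases hm : a ∈ up s
  · obtain ⟨y, _, rfl⟩ := mem_up.1 hm
    rw [up, Multiset.count_map_eq_count' _ _ add_two_inj]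
    exact h y (by simpa [parity_simps] using ha)
  · rw [Multiset.count_eq_zero_of_notMem hm]; omega

/-- Distinct parts, with every even part above every odd part. -/
def PA (l : Multiset ℕ) : Prop := l.Nodup ∧ evenAbove l

/-- Distinct odd parts, arbitrary even parts, with every odd part above every even part. -/
def PB (l : Multiset ℕ) : Prop := oddDistinct l ∧ oddAbove l

theorem PA_up (s : Multiset ℕ) : PA (up s) ↔ PA s := and_congr (nodup_up s) (evenAbove_up s)

theorem PB_up {s : Multiset ℕ} (h : PB s) : PB (up s) :=
  ⟨oddDistinct_up h.1, (oddAbove_up s).2 h.2⟩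

theorem PA_of_cons {a : ℕ} {s : Multiset ℕ} (h : PA (a ::ₘ s)) : PA s :=
  ⟨(Multiset.nodup_cons.1 h.1).2, fun x hx y hy => h.2 x (Multiset.mem_cons_of_mem hx) y
    (Multiset.mem_cons_of_mem hy)⟩

theorem PA_lift {k m : ℕ} {t : ℤ} {s : Multiset ℕ} (hs : s ∈ ParitySet PA k m t)
    (h : ∀ x ∈ s, 3 ≤ x) : s ∈ up '' ParitySet PA k m (t - 2 * (k + m)) := by
  obtain ⟨u, hu, rfl⟩ := exists_up h
  obtain ⟨-, h2, h3, h4, h5⟩ := hs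
  rw [countP_up] at h3
  rw [card_up] at h4
  rw [sum_up, h4] at h5
  exact ⟨u, ⟨hu, (PA_up u).1 h2, h3, h4, by omega⟩, rfl⟩

theorem PB_up_mem {k m : ℕ} {t : ℤ} {s : Multiset ℕ}
    (hs : s ∈ ParitySet PB k m (t - 2 * (k + m))) : up s ∈ ParitySet PB k m t := by
  obtain ⟨h1, h2, h3, h4, h5⟩ := hs
  refine ⟨?_, PB_up h2, by rwa [countP_up], by rwa [card_up], ?_⟩
  · intro x hx
    obtain ⟨y, _, rfl⟩ := mem_up.1 hx
    omega
  · rw [sum_up, h4]; omega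

theorem ncard_step {X Y Z : Set (Multiset ℕ)} (f g : Multiset ℕ → Multiset ℕ) (hY : Y.Finite)
    (hZ : Z.Finite) (h : X ⊆ f '' Y ∪ g '' Z) : (X.ncard : ℤ) ≤ Y.ncard + Z.ncard := by
  have h1 := Set.ncard_le_ncard h ((hY.image f).union (hZ.image g))
  have h2 := Set.ncard_union_le (f '' Y) (g '' Z)
  have h3 := Set.ncard_image_le (f := f) hY
  have h4 := Set.ncard_image_le (f := g) hZ
  omega

theorem ncard_step' {X Y Z : Set (Multiset ℕ)} {f g : Multiset ℕ → Multiset ℕ} (hX : X.Finite)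
    (hf : f.Injective) (hg : g.Injective) (hfX : ∀ s ∈ Y, f s ∈ X) (hgX : ∀ s ∈ Z, g s ∈ X)
    (hfg : ∀ s ∈ Y, ∀ u ∈ Z, f s ≠ g u) : (Y.ncard + Z.ncard : ℤ) ≤ X.ncard := by
  have hs : f '' Y ∪ g '' Z ⊆ X := by
    rintro _ (⟨s, hs, rfl⟩ | ⟨s, hs, rfl⟩)
    · exact hfX s hs
    · exact hgX s hs
  have h1 := Set.ncard_le_ncard hs hX
  have hd : Disjoint (f '' Y) (g '' Z) := by
    rw [Set.disjoint_left]
    rintro _ ⟨s, hs, rfl⟩ ⟨u, hu, h⟩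
    exact hfg s hs u hu h.symm
  have hu := hX.subset hs
  rw [Set.ncard_union_eq hd (hu.subset Set.subset_union_left) (hu.subset Set.subset_union_right),
    Set.ncard_image_of_injective _ hf, Set.ncard_image_of_injective _ hg] at h1
  exact_mod_cast h1

theorem ParitySet_neg (P : Multiset ℕ → Prop) (k m : ℕ) (t : ℤ) (ht : t < 0) :
    (ParitySet P k m t).ncard = 0 := by
  rw [Set.ncard_eq_zero (ParitySet_finite P k m t), Set.eq_empty_iff_forall_notMem]
  rintro s ⟨-, -, -, -, h⟩
  omega

theorem even_of_countP {s : Multiset ℕ} (h : s.countP Odd = 0) : ∀ x ∈ s, Even x := fun x hx =>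
  Nat.not_odd_iff_even.1 (Multiset.countP_eq_zero.1 h x hx)

/-! ### Upper bound for the even-above-odd partitions -/

/-- With no odd part, the smallest part is either at least `4`, so that `2` can be subtracted from
every part, or equal to `2`, in which case it is removed before that subtraction. -/
theorem stepA_even (m : ℕ) (t : ℤ) : ((ParitySet PA 0 (m + 1) t).ncard : ℤ) ≤
    (ParitySet PA 0 (m + 1) (t - 2 * (m + 1))).ncard + (ParitySet PA 0 m (t - 2 * (m + 1))).ncard := by
  refine ncard_step up (fun s => 2 ::ₘ up s) (ParitySet_finite ..) (ParitySet_finite ..) ?_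
  intro s hs
  have he := even_of_countP hs.2.2.1
  by_cases h2 : 2 ∈ s
  · right
    obtain ⟨s, rfl⟩ := Multiset.exists_cons_of_mem h2
    obtain ⟨h1, h2, h3, h4, h5⟩ := hs
    have hmem : s ∈ ParitySet PA 0 m (t - 2) := by
      refine ⟨fun x hx => h1 x (Multiset.mem_cons_of_mem hx), PA_of_cons h2, ?_, ?_, ?_⟩
      · simpa [Multiset.countP_cons, parity_simps] using h3
      · simp at h4; omega
      · rw [Multiset.sum_cons] at h5; omega
    have := PA_lift hmem fun x hx => by
      have p1 := h1 x (Multiset.mem_cons_of_mem hx)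
      have p2 := he x (Multiset.mem_cons_of_mem hx)
      have p3 : x ≠ 2 := fun h => (Multiset.nodup_cons.1 h2.1).1 (h ▸ hx)
      rcases p2 with ⟨y, rfl⟩
      omega
    obtain ⟨u, hu, rfl⟩ := this
    refine ⟨u, ?_, rfl⟩
    convert hu using 2
    push_cast; ring
  · left
    have := PA_lift hs fun x hx => by
      have p1 := hs.1 x hx
      have p2 := he x hx
      have p3 : x ≠ 2 := fun h => h2 (h ▸ hx)
      rcases p2 with ⟨y, rfl⟩
      omega
    simpa using this

/-- Once an odd part exists and `1` is not a part, all odd parts are at least `3`, and the even parts,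
being larger, are too. -/
theorem three_le_A {s : Multiset ℕ} (hA : PA s) (hk : 0 < s.countP Odd)
    (h1 : 1 ∉ s) : ∀ x ∈ s, 3 ≤ x := by
  obtain ⟨y, hy, hyo⟩ := Multiset.countP_pos.1 hk
  have key : ∀ x ∈ s, Odd x → 3 ≤ x := by
    intro x hx hxo
    have p1 : x ≠ 1 := fun h => h1 (h ▸ hx)
    rcases hxo with ⟨z, rfl⟩
    omega
  intro x hx
  rcases Nat.even_or_odd x with he | ho
  · have := hA.2 x hx y hy he hyo
    have := key y hy hyo
    omega
  · exact key x hx ho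

theorem cons_one_A {k m : ℕ} {t : ℤ} {s : Multiset ℕ} (hs : 1 ::ₘ s ∈ ParitySet PA (k + 1) m t) :
    s ∈ ParitySet PA k m (t - 1) ∧ 1 ∉ s := by
  obtain ⟨h1, h2, h3, h4, h5⟩ := hs
  refine ⟨⟨fun x hx => h1 x (Multiset.mem_cons_of_mem hx), PA_of_cons h2, ?_, ?_, ?_⟩,
    (Multiset.nodup_cons.1 h2.1).1⟩
  · simpa [Multiset.countP_cons] using h3
  · simp at h4; omega
  · rw [Multiset.sum_cons] at h5; omega

/-- The single odd part is removed when it equals `1`; the remaining even parts are at least `2`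
and need no shift. -/
theorem stepA_one (m : ℕ) (t : ℤ) : ((ParitySet PA 1 m t).ncard : ℤ) ≤
    (ParitySet PA 1 m (t - 2 * (1 + m))).ncard + (ParitySet PA 0 m (t - 1)).ncard := by
  refine ncard_step up (fun s => 1 ::ₘ s) (ParitySet_finite ..) (ParitySet_finite ..) ?_
  intro s hs
  by_cases h1 : 1 ∈ s
  · right
    obtain ⟨s, rfl⟩ := Multiset.exists_cons_of_mem h1
    exact ⟨s, (cons_one_A hs).1, rfl⟩
  · left
    exact_mod_cast PA_lift hs (three_le_A hs.2.1 (by rw [hs.2.2.1]; omega) h1)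

/-- With at least two odd parts, removing the part `1` leaves only parts that are at least `3`. -/
theorem stepA (k m : ℕ) (t : ℤ) : ((ParitySet PA (k + 2) m t).ncard : ℤ) ≤
    (ParitySet PA (k + 2) m (t - 2 * (k + 2 + m))).ncard +
      (ParitySet PA (k + 1) m (t - 1 - 2 * (k + 1 + m))).ncard := by
  refine ncard_step up (fun s => 1 ::ₘ up s) (ParitySet_finite ..) (ParitySet_finite ..) ?_
  intro s hs
  by_cases h1 : 1 ∈ s
  · right
    obtain ⟨s, rfl⟩ := Multiset.exists_cons_of_mem h1
    obtain ⟨hs, h1⟩ := cons_one_A hs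
    obtain ⟨u, hu, rfl⟩ :=
      PA_lift hs (three_le_A hs.2.1 (by rw [hs.2.2.1]; omega) h1)
    exact ⟨u, by exact_mod_cast hu, rfl⟩
  · left
    exact_mod_cast PA_lift hs (three_le_A hs.2.1 (by rw [hs.2.2.1]; omega) h1)

theorem ParitySet_zero_le (P : Multiset ℕ → Prop) (t : ℤ) : ((ParitySet P 0 0 t).ncard : ℤ) ≤ R 0 t := by
  have hsub : ParitySet P 0 0 t ⊆ {s | s = 0 ∧ t = 0} := by
    rintro s ⟨-, -, -, h4, h5⟩
    obtain rfl := Multiset.card_eq_zero.1 h4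
    exact ⟨rfl, by simpa using h5.symm⟩
  rw [R_zero]
  by_cases ht : t = 0
  · rw [if_pos ht]
    have := Set.ncard_le_ncard hsub (by simp [ht])
    simp [ht] at this
    simpa [ht] using this
  · rw [if_neg ht]
    have := Set.ncard_le_ncard hsub (by simp [ht])
    simp [ht] at this
    simpa using this.le

/-- Upper bound for the partitions satisfying `PA`, from the coverings `stepA_even`, `stepA_one`,
`stepA`. -/
theorem PA_le (N k m : ℕ) (hN : k + m = N) (t : ℤ) :
    ((ParitySet PA k m t).ncard : ℤ) ≤ R N (t - eA k m) := by
  induction N generalizing k m t with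
  | zero =>
    obtain ⟨rfl, rfl⟩ : k = 0 ∧ m = 0 := by omega
    simpa [eA] using ParitySet_zero_le PA t
  | succ N ih =>
    induction t using int_ind (c := 2 * (N + 1)) (by positivity) with
    | neg t ht => rw [ParitySet_neg _ _ _ _ ht]; exact_mod_cast R_nonneg _ _
    | step t h =>
      have hc : (k : ℤ) + m = N + 1 := by exact_mod_cast hN
      rw [R_succ]
      rcases k with _ | _ | k
      · obtain ⟨m, rfl⟩ : ∃ j, m = j + 1 := ⟨m - 1, by omega⟩
        obtain rfl : m = N := by omega
        have h1 := stepA_even m t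
        have h2 := ih 0 m (by omega) (t - 2 * (m + 1))
        simp only [eA, if_true] at *
        push_cast at *
        ring_nf at *
        linarith
      · obtain rfl : m = N := by omega
        have h1 := stepA_one m t
        have h2 := ih 0 m (by omega) (t - 1)
        simp [eA] at *
        ring_nf at *
        linarith
      · obtain rfl : k + 1 + m = N := by omega
        have h1 := stepA k m t
        have h2 := ih (k + 1) m (by omega) (t - 1 - 2 * (k + 1 + m))
        simp [eA] at *
        ring_nf at *
        linarith

/-! ### Lower bound for the odd-above-even partitions -/

theorem PB_cons_two {k m : ℕ} {t : ℤ} {s : Multiset ℕ} (hs : s ∈ ParitySet PB k m (t - 2))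
    (hodd : ∀ x ∈ s, Odd x → 2 < x) : 2 ::ₘ s ∈ ParitySet PB k (m + 1) t := by
  obtain ⟨h1, h2, h3, h4, h5⟩ := hs
  refine ⟨?_, ⟨?_, ?_⟩, ?_, ?_, ?_⟩
  · intro x hx
    rcases Multiset.mem_cons.1 hx with rfl | hx
    · norm_num
    · exact h1 x hx
  · intro a ha
    rw [Multiset.count_cons_of_ne (by rintro rfl; revert ha; decide)]
    exact h2.1 a ha
  · intro a ha b hb hao hbe
    have ha : a ∈ s := (Multiset.mem_cons.1 ha).resolve_left (by rintro rfl; revert hao; decide)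
    rcases Multiset.mem_cons.1 hb with rfl | hb
    · exact hodd a ha hao
    · exact h2.2 a ha b hb hao hbe
  · rw [Multiset.countP_cons_of_neg _ (by decide), h3]
  · rw [Multiset.card_cons, h4]; ring
  · rw [Multiset.sum_cons]; omega

theorem cons_injective (a : ℕ) : Function.Injective fun s : Multiset ℕ => a ::ₘ s :=
  fun _ _ h => (Multiset.cons_inj_right a).1 h

theorem up_ne_cons {a : ℕ} (ha : a < 3) {s u : Multiset ℕ} (hs : ∀ x ∈ s, 0 < x) :
    up s ≠ a ::ₘ u := by
  intro h
  have : a ∈ up s := h ▸ Multiset.mem_cons_self a u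
  obtain ⟨y, hy, rfl⟩ := mem_up.1 this
  have := hs y hy
  omega

/-- Shifted partitions have no part `2`, so they differ from those obtained by adjoining a `2`. -/
theorem stepB (k m : ℕ) (t : ℤ) : ((ParitySet PB k (m + 2) (t - 2 * (k + m + 2))).ncard +
    (ParitySet PB k (m + 1) (t - 2)).ncard : ℤ) ≤ (ParitySet PB k (m + 2) t).ncard := by
  refine ncard_step' (ParitySet_finite ..) up_injective (cons_injective 2) ?_ ?_ ?_
  · intro s hs
    apply PB_up_mem
    push_cast
    rwa [← add_assoc]
  · intro s hs
    refine PB_cons_two hs fun x hx hxo => ?_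
    obtain ⟨h1, h2, h3, h4, h5⟩ := hs
    -- `s` has an even part, which is at least `2`, and all odd parts lie above it.
    have : ¬ ∀ y ∈ s, Odd y := fun h => by
      have := Multiset.countP_eq_card.2 h
      omega
    push Not at this
    obtain ⟨y, hy, hyo⟩ := this
    rw [Nat.not_odd_iff_even] at hyo
    have p1 := h2.2 x hx y hy hxo hyo
    have p2 := h1 y hy
    rcases hyo with ⟨z, rfl⟩
    omega
  · exact fun s hs u _ => up_ne_cons (by norm_num) hs.1

/-- The first even part `2` is adjoined to odd parts only; these are shifted to make room for it. -/
theorem stepB_one (k : ℕ) (t : ℤ) : ((ParitySet PB k 1 (t - 2 * (k + 1))).ncard +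
    (ParitySet PB k 0 (t - 2 - 2 * k)).ncard : ℤ) ≤ (ParitySet PB k 1 t).ncard := by
  refine ncard_step' (g := fun s => 2 ::ₘ up s) (ParitySet_finite ..) up_injective
    ((cons_injective 2).comp up_injective) ?_ ?_ ?_
  · intro s hs
    exact PB_up_mem (by exact_mod_cast hs)
  · intro s hs
    refine PB_cons_two (PB_up_mem (by simpa using hs)) fun x hx _ => ?_
    obtain ⟨y, hy, rfl⟩ := mem_up.1 hx
    have := hs.1 y hy
    omega
  · exact fun s hs u _ => up_ne_cons (by norm_num) hs.1

/-- With no even part, the part `1` is adjoined after shifting the other odd parts. -/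
theorem stepB_odd (k : ℕ) (t : ℤ) : ((ParitySet PB (k + 1) 0 (t - 2 * (k + 1))).ncard +
    (ParitySet PB k 0 (t - 1 - 2 * k)).ncard : ℤ) ≤ (ParitySet PB (k + 1) 0 t).ncard := by
  refine ncard_step' (g := fun s => 1 ::ₘ up s) (ParitySet_finite ..) up_injective
    ((cons_injective 1).comp up_injective) ?_ ?_ ?_
  · intro s hs
    apply PB_up_mem
    simpa using hs
  · intro s hs
    have hpos := hs.1
    obtain ⟨h1, h2, h3, h4, h5⟩ := PB_up_mem (k := k) (m := 0) (t := t - 1)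
      (by rwa [Nat.cast_zero, add_zero])
    have hall : ∀ x ∈ up s, Odd x := Multiset.countP_eq_card.1 (by omega)
    refine ⟨?_, ⟨?_, ?_⟩, ?_, ?_, ?_⟩
    · intro x hx
      rcases Multiset.mem_cons.1 hx with rfl | hx
      · norm_num
      · exact h1 x hx
    · intro a ha
      by_cases h : a = 1
      · subst h
        rw [Multiset.count_cons_self, Multiset.count_eq_zero_of_notMem]
        intro h
        obtain ⟨y, hy, h⟩ := mem_up.1 h
        omega
      · rw [Multiset.count_cons_of_ne h]
        exact h2.1 a ha
    · intro a _ b hb _ hbe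
      exfalso
      rw [← Nat.not_odd_iff_even] at hbe
      rcases Multiset.mem_cons.1 hb with rfl | hb
      · exact hbe odd_one
      · exact hbe (hall b hb)
    · rw [Multiset.countP_cons_of_pos _ odd_one, h3]
    · rw [Multiset.card_cons, h4]
    · rw [Multiset.sum_cons]; omega
  · exact fun s hs u _ => up_ne_cons (by norm_num) hs.1

theorem eB_nonneg (k m : ℕ) : 0 ≤ eB k m := by
  rw [eB]; split <;> positivity

/-- Lower bound for the partitions satisfying `PB`, from the injections `stepB`, `stepB_one`,
`stepB_odd`. -/
theorem PB_ge (N k m : ℕ) (hN : k + m = N) (t : ℤ) :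
    R N (t - eB k m) ≤ ((ParitySet PB k m t).ncard : ℤ) := by
  induction N generalizing k m t with
  | zero =>
    obtain ⟨rfl, rfl⟩ : k = 0 ∧ m = 0 := by omega
    rw [R_zero]
    split
    · next h =>
      have h : t = 0 := by simpa [eB] using h
      subst h
      have : (0 : Multiset ℕ) ∈ ParitySet PB 0 0 0 := by
        simp [ParitySet, PB, oddDistinct, oddAbove]
      have := (Set.ncard_pos (ParitySet_finite PB 0 0 0)).2 ⟨_, this⟩
      exact_mod_cast this
    · positivity
  | succ N ih =>
    induction t using int_ind (c := 2 * (N + 1)) (by positivity) with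
    | neg t ht => rw [R_neg _ _ (by have := eB_nonneg k m; omega)]; positivity
    | step t h =>
      rw [R_succ]
      rcases m with _ | _ | m
      · obtain rfl : k = N + 1 := by omega
        have h1 := stepB_odd N t
        have h2 := ih N 0 (by omega) (t - 1 - 2 * N)
        simp [eB] at *
        ring_nf at *
        linarith
      · obtain rfl : k = N := by omega
        have h1 := stepB_one k t
        have h2 := ih k 0 (by omega) (t - 2 - 2 * k)
        simp [eB] at *
        ring_nf at *
        linarith
      · obtain rfl : k + m + 1 = N := by omega
        have h1 := stepB k m t
        have h2 := ih k (m + 1) (by omega) (t - 2)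
        simp [eB] at *
        ring_nf at *
        linarith

theorem stmt5 (n : ℕ) (hn : 8 ≤ n) :
    pcount n (fun l => l.Nodup ∧ evenAbove l) <
      pcount n (fun l => oddDistinct l ∧ oddAbove l) := by
  have hA := pcount_eq n PA
  have hB := pcount_eq n PB
  have key : ∑ N ∈ Finset.range (n + 1), gap N n ≤ (pcount n PB : ℤ) - pcount n PA := by
    rw [hA, hB]
    push_cast
    rw [← Finset.sum_sub_distrib]
    refine Finset.sum_le_sum fun N _ => ?_
    rw [gap, ← Finset.sum_sub_distrib]
    refine Finset.sum_le_sum fun k hk => ?_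
    have hk : k + (N - k) = N := by rw [Finset.mem_range] at hk; omega
    exact sub_le_sub (PB_ge N k (N - k) hk n) (PA_le N k (N - k) hk n)
  have pos := gap_sum_pos n hn
  have : pcount n PA < pcount n PB := by omega
  exact this
end
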